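/- Let R be a reduced local Cohen–Macaulay ring and S a finite birational extension of R (R ⊆ S ⊆ Q, S module-finite over R). Then tr_R(S) = tr_R(S*) = tr_R(S**) = S*, where S* = Hom_R(S,R) is identified with the conductor R : S. -/

import Mathlib

open IsLocalRing

noncomputable def traceIdeal (R : Type*) [CommRing R] (M : Type*) [AddCommGroup M]
    [Module R M] : Ideal R :=
  ⨆ f : M →ₗ[R] R, LinearMap.range f

def IsCohenMacaulayLocalRing (R : Type*) [CommRing R] [IsLocalRing R] : Prop :=
  ∃ rs : List R, (∀ r ∈ rs, r ∈ maximalIdeal R) ∧ RingTheory.Sequence.IsRegular R rs ∧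
    ringKrullDim R = rs.length

noncomputable def moduleLength (R M : Type*) [CommRing R] [AddCommGroup M] [Module R M] :
    WithBot ℕ∞ :=
  Order.krullDim (Submodule R M)

noncomputable def conductorIdeal (R : Type*) [CommRing R] : Ideal R :=
  Submodule.colon (1 : Submodule R (FractionRing R))
    (Subalgebra.toSubmodule (integralClosure R (FractionRing R)))

def idealIntegralClosure {R : Type*} [CommRing R] (I : Ideal R) : Set R :=
  {x | ∃ n : ℕ, 0 < n ∧ ∃ a : ℕ → R, (∀ i ∈ Finset.Icc 1 n, a i ∈ I ^ i) ∧
    x ^ n + ∑ i ∈ Finset.Icc 1 n, a i * x ^ (n - i) = 0}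

def HasMinimalMultiplicity (R : Type*) [CommRing R] [IsLocalRing R] : Prop :=
  ∃ x : R, (x ∈ maximalIdeal R ∧
      ∃ n : ℕ, maximalIdeal R ^ (n + 1) = Ideal.span {x} * maximalIdeal R ^ n) ∧
    maximalIdeal R ^ 2 = Ideal.span {x} * maximalIdeal R

/-! For an `R`-algebra `A`, every value `f a` of a form `f` on `A` is the value at `1` of the form
`x ↦ f (x * a)`, so `tr A = {f 1 | f ∈ A*}`. The same trick works on any module `M` with a linear
map `φ : A → End M` satisfying `φ 1 = id`: since `f m` is the value at `1` of `a ↦ f (φ a m)`, we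
get `tr M ≤ tr A`. Such a `φ` passes from `M` to its dual by transposition, hence `tr A* ≤ tr A` and
`tr A** ≤ tr A`, and evaluation gives the reverse inclusions.

If `A = S` lies between `R` and its total ring of fractions, each form `f` on `S` is multiplication
by `f 1`, so the elements `f 1` are exactly those of the conductor `R : S`. -/

section Module

variable {R M N : Type*} [CommRing R] [AddCommGroup M] [Module R M] [AddCommGroup N] [Module R N]

theorem traceIdeal_le_iff {I : Ideal R} :
    traceIdeal R M ≤ I ↔ ∀ (f : Module.Dual R M) (m : M), f m ∈ I := by
  simp only [traceIdeal, iSup_le_iff, LinearMap.range_le_iff_comap, Submodule.eq_top_iff',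
    Submodule.mem_comap]

theorem apply_mem_traceIdeal (f : Module.Dual R M) (m : M) : f m ∈ traceIdeal R M :=
  traceIdeal_le_iff.mp le_rfl f m

variable (R M) in
theorem traceIdeal_le_traceIdeal_dual : traceIdeal R M ≤ traceIdeal R (Module.Dual R M) :=
  traceIdeal_le_iff.mpr fun f m ↦ apply_mem_traceIdeal (Module.Dual.eval R M m) f

theorem traceIdeal_le_traceIdeal_of_id_mem_range {φ : N →ₗ[R] M →ₗ[R] M}
    (hφ : LinearMap.id ∈ LinearMap.range φ) : traceIdeal R M ≤ traceIdeal R N := by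
  obtain ⟨n, hn⟩ := hφ
  refine traceIdeal_le_iff.mpr fun f m ↦ ?_
  have hfm : (f ∘ₗ φ.flip m) n = f m := by simp [hn]
  exact hfm ▸ apply_mem_traceIdeal (f ∘ₗ φ.flip m) n

theorem id_mem_range_transpose_comp {φ : N →ₗ[R] M →ₗ[R] M}
    (hφ : LinearMap.id ∈ LinearMap.range φ) :
    LinearMap.id ∈ LinearMap.range (Module.Dual.transpose ∘ₗ φ) := by
  obtain ⟨n, hn⟩ := hφ
  exact ⟨n, by rw [LinearMap.comp_apply, hn]; exact LinearMap.dualMap_id⟩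

end Module

section Algebra

variable (R A : Type*) [CommRing R] [Ring A] [Algebra R A]

theorem traceIdeal_algebra_eq_range_eval_one :
    traceIdeal R A = LinearMap.range (Module.Dual.eval R A 1) := by
  refine le_antisymm (traceIdeal_le_iff.mpr fun f a ↦ ?_) ?_
  · exact ⟨f ∘ₗ LinearMap.mulRight R a, by simp⟩
  · rintro _ ⟨f, rfl⟩
    exact apply_mem_traceIdeal f 1

theorem id_mem_range_mul : LinearMap.id ∈ LinearMap.range (LinearMap.mul R A) :=
  ⟨1, LinearMap.ext one_mul⟩

theorem traceIdeal_dual_algebra : traceIdeal R (Module.Dual R A) = traceIdeal R A :=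
  le_antisymm
    (traceIdeal_le_traceIdeal_of_id_mem_range (id_mem_range_transpose_comp (id_mem_range_mul R A)))
    (traceIdeal_le_traceIdeal_dual R A)

theorem traceIdeal_dual_dual_algebra :
    traceIdeal R (Module.Dual R (Module.Dual R A)) = traceIdeal R A :=
  le_antisymm
    (traceIdeal_le_traceIdeal_of_id_mem_range
      (id_mem_range_transpose_comp (id_mem_range_transpose_comp (id_mem_range_mul R A))))
    ((traceIdeal_le_traceIdeal_dual R A).trans (traceIdeal_le_traceIdeal_dual R _))

end Algebra

section Conductor

variable {R K : Type*} [CommRing R] [CommRing K] [Algebra R K]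

theorem mem_colon_one_iff_exists_dual [FaithfulSMul R K] {N : Submodule R K} {c : R} :
    c ∈ (1 : Submodule R K).colon N ↔
      ∃ f : Module.Dual R N, ∀ x : N, algebraMap R K (f x) = c • (x : K) := by
  refine ⟨fun hc ↦ ?_, fun ⟨f, hf⟩ ↦ ?_⟩
  · have hcN (x : N) : (c • N.subtype) x ∈ LinearMap.range (Algebra.linearMap R K) :=
      Submodule.mem_one.mp (Submodule.mem_colon.mp hc x x.2)
    have hinj := FaithfulSMul.algebraMap_injective R K
    exact ⟨LinearMap.codRestrictOfInjective (c • N.subtype) (Algebra.linearMap R K) hinj hcN,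
      LinearMap.codRestrictOfInjective_comp_apply _ _ hinj hcN⟩
  · exact Submodule.mem_colon.mpr fun x hx ↦ Submodule.mem_one.mpr ⟨f ⟨x, hx⟩, hf ⟨x, hx⟩⟩

theorem dual_apply_smul_comm (W : Submonoid R) [IsLocalization W K] {N : Submodule R K}
    (f : Module.Dual R N) (x y : N) : f x • (y : K) = f y • (x : K) := by
  obtain ⟨b, hb⟩ := IsLocalization.exist_integer_multiples_of_finite W ![(x : K), y]
  obtain ⟨a, hx : algebraMap R K a = (b : R) • (x : K)⟩ := hb 0
  obtain ⟨c, hy : algebraMap R K c = (b : R) • (y : K)⟩ := hb 1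
  have hxy : c • x = a • y := Subtype.ext <| by
    simp only [Submodule.coe_smul, Algebra.smul_def, hx, hy]
    ring
  have hf : c * f x = a * f y := by
    simpa only [map_smul, smul_eq_mul] using congrArg f hxy
  refine (IsLocalization.map_units K b).mul_left_cancel ?_
  calc algebraMap R K b * f x • (y : K)
      = algebraMap R K (c * f x) := by rw [map_mul, hy]; simp only [Algebra.smul_def]; ring
    _ = algebraMap R K (a * f y) := by rw [hf]
    _ = algebraMap R K b * f y • (x : K) := by rw [map_mul, hx]; simp only [Algebra.smul_def]; ring

theorem dual_apply_eq_apply_one_smul (W : Submonoid R) [IsLocalization W K] {S : Subalgebra R K}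
    (f : Module.Dual R S) (s : S) : algebraMap R K (f s) = f 1 • (s : K) := by
  rw [Algebra.algebraMap_eq_smul_one]
  exact dual_apply_smul_comm (N := Subalgebra.toSubmodule S) W f s (1 : S)

theorem traceIdeal_subalgebra_eq_colon (W : Submonoid R) [IsLocalization W K] [FaithfulSMul R K]
    (S : Subalgebra R K) :
    traceIdeal R S = (1 : Submodule R K).colon (Subalgebra.toSubmodule S) := by
  rw [traceIdeal_algebra_eq_range_eval_one]
  ext c
  rw [mem_colon_one_iff_exists_dual]
  constructor
  · rintro ⟨f, rfl⟩
    exact ⟨f, dual_apply_eq_apply_one_smul W f⟩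
  · rintro ⟨f, hf⟩
    refine ⟨f, FaithfulSMul.algebraMap_injective R K ?_⟩
    exact (hf (1 : S)).trans (Algebra.algebraMap_eq_smul_one c).symm

theorem trace_of_birational_extension_general [IsFractionRing R K] (S : Subalgebra R K) :
    traceIdeal R S = (1 : Submodule R K).colon (Subalgebra.toSubmodule S) ∧
      traceIdeal R (Module.Dual R S) = traceIdeal R S ∧
      traceIdeal R (Module.Dual R (Module.Dual R S)) = traceIdeal R S :=
  ⟨traceIdeal_subalgebra_eq_colon (nonZeroDivisors R) S, traceIdeal_dual_algebra R S,
    traceIdeal_dual_dual_algebra R S⟩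

end Conductor

set_option synthInstance.maxHeartbeats 800000 in
/-- Let `R` be a reduced local Cohen–Macaulay ring and `S` a finite
birational extension of `R` (`R ⊆ S ⊆ Q`, `S` module-finite over `R`).  Then
`tr_R(S) = tr_R(S*) = tr_R(S**) = S*`, where `S* = Hom_R(S,R)` is identified with the
conductor `R : S = {r ∈ R | rS ⊆ R}`. -/
theorem trace_of_birational_extension
    (R : Type*) [CommRing R] [IsNoetherianRing R] [IsLocalRing R] [IsReduced R]
    (hCM : IsCohenMacaulayLocalRing R)
    (S : Subalgebra R (FractionRing R)) (hfin : Module.Finite R ↥S) :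
    traceIdeal R ↥S =
        Submodule.colon (1 : Submodule R (FractionRing R)) (Subalgebra.toSubmodule S) ∧
      traceIdeal R (Module.Dual R ↥S) = traceIdeal R ↥S ∧
      traceIdeal R (Module.Dual R (Module.Dual R ↥S)) = traceIdeal R ↥S :=
  trace_of_birational_extension_general S
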